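/- Let 𝔤 be a finite-dimensional real Lie algebra and V a finite-dimensional real inner product space, regarded as an abelian Lie algebra, with b : 𝔤 → End(V) a Lie algebra homomorphism such that each b(X) is skew-adjoint. Then a differentiable curve (u,v) : ℝ → 𝔤 × V satisfies the geodesic equation (u,v)' = −ad(u,v)ᵀ(u,v) of the right-invariant metric on 𝔤 ⋉ V if and only if u'(t) = −ad(u(t))ᵀu(t) and v'(t) = b(u(t))v(t) for all t. -/

import Mathlib

open scoped RealInnerProductSpace

noncomputable section

/-- The bracket of the semidirect product `G ⋉ V`, for a bracket `brG` on `G` acting on the abelian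
algebra `V` through `b`, both encoded as bare bilinear maps. -/
def semidirectBracket {G V : Type*} [AddCommGroup G] [Module ℝ G] [AddCommGroup V] [Module ℝ V]
    (brG : G →ₗ[ℝ] G →ₗ[ℝ] G) (b : G →ₗ[ℝ] V →ₗ[ℝ] V) (p q : G × V) : G × V :=
  (brG p.1 q.1, b p.1 q.2 - b q.1 p.2)

/-- The orthogonal sum of the inner products of `G` and `V`. It is a plain function because Mathlib
gives `G × V` the sup norm. -/
def prodInner {G V : Type*} [NormedAddCommGroup G] [InnerProductSpace ℝ G]
    [NormedAddCommGroup V] [InnerProductSpace ℝ V] (p q : G × V) : ℝ :=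
  ⟪p.1, q.1⟫ + ⟪p.2, q.2⟫

/-- `adT x` is the transpose of `ad x = br x` with respect to the pairing `B`. This is a relation
rather than an operator so that it makes sense in infinite dimensions, where a transpose need not
exist. -/
def IsAdTranspose {E : Type*} (B : E → E → ℝ) (br adT : E → E → E) : Prop :=
  ∀ x y z, B (adT x y) z = B y (br x z)

section

variable {G V : Type*} [NormedAddCommGroup G] [InnerProductSpace ℝ G]
  [NormedAddCommGroup V] [InnerProductSpace ℝ V]

theorem isAdTranspose_adjoint [FiniteDimensional ℝ G] (brG : G →ₗ[ℝ] G →ₗ[ℝ] G) :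
    IsAdTranspose (inner ℝ) (fun X => brG X) (fun X => LinearMap.adjoint (brG X)) :=
  fun X Y Z => LinearMap.adjoint_inner_left (brG X) Z Y

theorem ext_prodInner_right {p q : G × V} (h : ∀ r, prodInner p r = prodInner q r) : p = q :=
  WithLp.toLp_injective 2 <| ext_inner_right ℝ fun r => h r.ofLp

theorem inner_apply_self_eq_zero_of_skew {T : V →ₗ[ℝ] V}
    (hT : ∀ v w : V, ⟪T v, w⟫ + ⟪v, T w⟫ = 0) (v : V) : ⟪v, T v⟫ = 0 := by
  have h := hT v v
  rw [real_inner_comm] at h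
  linarith

-- Both arguments have the same `V`-component `v`: skewness then kills the term `⟪v, b Z v⟫`, which
-- would otherwise couple `v` into the `G`-component.
theorem IsAdTranspose.semidirectBracket_apply_of_skew
    {brG : G →ₗ[ℝ] G →ₗ[ℝ] G} {b : G →ₗ[ℝ] V →ₗ[ℝ] V}
    {adT : G → G → G} {adTP : G × V → G × V → G × V}
    (hadTP : IsAdTranspose prodInner (semidirectBracket brG b) adTP)
    (hadT : IsAdTranspose (inner ℝ) (fun X => brG X) adT)
    (hskew : ∀ (X : G) (v w : V), ⟪b X v, w⟫ + ⟪v, b X w⟫ = 0) (X Y : G) (v : V) :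
    adTP (X, v) (Y, v) = (adT X Y, -b X v) := by
  refine ext_prodInner_right fun ⟨Z, w⟩ => ?_
  calc prodInner (adTP (X, v) (Y, v)) (Z, w)
    _ = ⟪Y, brG X Z⟫ + ⟪v, b X w - b Z v⟫ := hadTP (X, v) (Y, v) (Z, w)
    _ = ⟪Y, brG X Z⟫ + ⟪v, b X w⟫ := by
      rw [inner_sub_right, inner_apply_self_eq_zero_of_skew (hskew Z), sub_zero]
    _ = ⟪adT X Y, Z⟫ + ⟪-b X v, w⟫ := by
      rw [hadT X Y Z, inner_neg_left, eq_neg_of_add_eq_zero_right (hskew X v w)]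

theorem linear_action_geodesic_equation_isometric_general
    {brG : G →ₗ[ℝ] G →ₗ[ℝ] G} {b : G →ₗ[ℝ] V →ₗ[ℝ] V}
    (hskew : ∀ (X : G) (v w : V), ⟪b X v, w⟫ + ⟪v, b X w⟫ = 0)
    {adT : G → G → G} (hadT : IsAdTranspose (inner ℝ) (fun X => brG X) adT)
    {adTP : G × V → G × V → G × V}
    (hadTP : IsAdTranspose prodInner (semidirectBracket brG b) adTP)
    {u : ℝ → G} {v : ℝ → V} (hu : Differentiable ℝ u) (hv : Differentiable ℝ v) :
    (∀ t, deriv (fun s => (u s, v s)) t = -adTP (u t, v t) (u t, v t)) ↔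
      (∀ t, deriv u t = -adT (u t) (u t)) ∧ ∀ t, deriv v t = b (u t) (v t) := by
  have deriv_pair (t : ℝ) : deriv (fun s => (u s, v s)) t = (deriv u t, deriv v t) :=
    ((hu t).hasDerivAt.prodMk (hv t).hasDerivAt).deriv
  simp only [deriv_pair, hadTP.semidirectBracket_apply_of_skew hadT hskew, Prod.neg_mk, neg_neg,
    Prod.mk.injEq, forall_and]

end

/-- Geodesic equation for an isometric linear action: on `𝔤 ⋉ V` with each
`b(X)` skew-adjoint, `u_t = −ad(u)ᵀu`, `v_t = b(u)v`. -/
theorem linear_action_geodesic_equation_isometric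
    {G V : Type*}
    [NormedAddCommGroup G] [InnerProductSpace ℝ G] [FiniteDimensional ℝ G]
    [NormedAddCommGroup V] [InnerProductSpace ℝ V] [FiniteDimensional ℝ V]
    (brG : G →ₗ[ℝ] G →ₗ[ℝ] G)
    (hGalt : ∀ X : G, brG X X = 0)
    (hGjac : ∀ X Y Z : G, brG X (brG Y Z) + brG Y (brG Z X) + brG Z (brG X Y) = 0)
    (b : G →ₗ[ℝ] V →ₗ[ℝ] V)
    (hbhom : ∀ X₁ X₂ : G, b (brG X₁ X₂) = b X₁ ∘ₗ b X₂ - b X₂ ∘ₗ b X₁)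
    (hskew : ∀ (X : G) (v₁ v₂ : V), ⟪b X v₁, v₂⟫ + ⟪v₁, b X v₂⟫ = 0)
    (adTP : G × V → G × V → G × V)
    (hadTP : ∀ p q r : G × V,
      ⟪(adTP p q).1, r.1⟫ + ⟪(adTP p q).2, r.2⟫ =
        ⟪q.1, brG p.1 r.1⟫ + ⟪q.2, b p.1 r.2 - b r.1 p.2⟫)
    (u : ℝ → G) (v : ℝ → V) (hu : Differentiable ℝ u) (hv : Differentiable ℝ v) :
    (∀ t : ℝ, deriv (fun s => (u s, v s)) t = - adTP (u t, v t) (u t, v t)) ↔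
      ((∀ t : ℝ, deriv u t = - LinearMap.adjoint (brG (u t)) (u t)) ∧
        (∀ t : ℝ, deriv v t = b (u t) (v t))) :=
  linear_action_geodesic_equation_isometric_general hskew (isAdTranspose_adjoint brG) hadTP hu hv
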